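/- Let N ≥ 2. Then for every u ∈ C_c^∞(ℝ^N), (N/2)² · ( ∫_{ℝ^N} |u(x)|² dx )² ≤ ( ∫_{ℝ^N} H⁰(x)² |u(x)|² dx ) · ( ∫_{ℝ^N} |(x/H⁰(x)) · ∇u(x)|² dx ), where the integrand of the last factor is interpreted as 0 at x = 0. -/

import Mathlib

/-!
Testing the vector field `x` against `u²` and integrating by parts in each coordinate gives
`∫ u (x · ∇u) = -(N/2) ∫ u²` (`integral_mul_fderiv_self`). Away from the origin the integrand is the
product of `H⁰ u` and `(x / H⁰) · ∇u`, so the claim is the Cauchy-Schwarz inequality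
(`sq_integral_mul_le`) for these two functions. Since Bochner integrals of non-integrable functions
are zero, both squares must be shown integrable. For this, `H⁰` is Lipschitz, hence continuous
(`continuous_polarNorm`), and `|x| ≤ b H⁰(x)` when `H ≤ b |·|`, so that `x / H⁰(x)` is bounded
(`norm_le_mul_polarNorm`).
-/

open MeasureTheory Set Filter
open scoped RealInnerProductSpace Topology ENNReal NNReal

noncomputable section

/-- `ℝ^N` as a Euclidean space. -/
abbrev Euc (N : ℕ) := EuclideanSpace ℝ (Fin N)

/-- `H : ℝ^N → ℝ` is a Finsler norm: nonnegative, convex, `C²` away from the origin,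
even and positively one-homogeneous, comparable to the Euclidean norm, and with
positive definite Hessian of `H²` away from the origin. -/
structure IsFinslerNorm {N : ℕ} (H : Euc N → ℝ) : Prop where
  nonneg : ∀ ξ, 0 ≤ H ξ
  convexOn : ConvexOn ℝ Set.univ H
  smooth : ContDiffOn ℝ 2 H {(0 : Euc N)}ᶜ
  homog : ∀ (t : ℝ) (ξ : Euc N), H (t • ξ) = |t| * H ξ
  bounds : ∃ a b : ℝ, 0 < a ∧ a ≤ b ∧ ∀ ξ : Euc N, a * ‖ξ‖ ≤ H ξ ∧ H ξ ≤ b * ‖ξ‖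
  hessPosDef : ∀ ξ : Euc N, ξ ≠ 0 → ∀ v : Euc N, v ≠ 0 →
    0 < iteratedFDeriv ℝ 2 (fun x => (H x) ^ 2) ξ ![v, v]

/-- The polar function `H⁰(x) = sup_{ξ ≠ 0} (ξ·x)/H(ξ)` of a Finsler norm. -/
def polarNorm {N : ℕ} (H : Euc N → ℝ) (x : Euc N) : ℝ :=
  sSup {r : ℝ | ∃ ξ : Euc N, ξ ≠ 0 ∧ r = ⟪ξ, x⟫ / H ξ}

/-- `u ∈ C_c^∞(Ω)`: a smooth function with compact support contained in `Ω`. -/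
def IsTestFun {N : ℕ} (Ω : Set (Euc N)) (u : Euc N → ℝ) : Prop :=
  ContDiff ℝ (⊤ : ℕ∞) u ∧ HasCompactSupport u ∧ tsupport u ⊆ Ω


/-! ### The polar function -/

section Polar

variable {N : ℕ} {H : Euc N → ℝ} {a b : ℝ}

lemma inner_div_le_norm_div (ha : 0 < a) (hlow : ∀ ξ, a * ‖ξ‖ ≤ H ξ) {ξ : Euc N} (hξ : ξ ≠ 0)
    (x : Euc N) : ⟪ξ, x⟫ / H ξ ≤ ‖x‖ / a := by
  have hn : 0 < ‖ξ‖ := norm_pos_iff.mpr hξ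
  have hpos : 0 < H ξ := (mul_pos ha hn).trans_le (hlow ξ)
  rw [div_le_div_iff₀ hpos ha]
  calc ⟪ξ, x⟫ * a ≤ ‖ξ‖ * ‖x‖ * a := by gcongr; exact real_inner_le_norm _ _
    _ = ‖x‖ * (a * ‖ξ‖) := by ring
    _ ≤ ‖x‖ * H ξ := by gcongr; exact hlow ξ

lemma inner_div_le_polarNorm (ha : 0 < a) (hlow : ∀ ξ, a * ‖ξ‖ ≤ H ξ) {ξ : Euc N} (hξ : ξ ≠ 0)
    (x : Euc N) : ⟪ξ, x⟫ / H ξ ≤ polarNorm H x := by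
  refine le_csSup ⟨‖x‖ / a, ?_⟩ ⟨ξ, hξ, rfl⟩
  rintro r ⟨η, hη, rfl⟩
  exact inner_div_le_norm_div ha hlow hη x

lemma norm_le_mul_polarNorm (ha : 0 < a) (hlow : ∀ ξ, a * ‖ξ‖ ≤ H ξ)
    (hup : ∀ ξ, H ξ ≤ b * ‖ξ‖) {x : Euc N} (hx : x ≠ 0) : ‖x‖ ≤ b * polarNorm H x := by
  have hn : 0 < ‖x‖ := norm_pos_iff.mpr hx
  have hpos : 0 < H x := (mul_pos ha hn).trans_le (hlow x)
  -- The supremum defining the polar function is tested with `ξ = x`.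
  have h := inner_div_le_polarNorm ha hlow hx x
  rw [real_inner_self_eq_norm_sq, div_le_iff₀ hpos] at h
  have h0 : 0 < polarNorm H x := by
    by_contra! hc
    nlinarith [mul_nonneg (neg_nonneg.mpr hc) hpos.le, pow_pos hn 2]
  have h1 : polarNorm H x * H x ≤ polarNorm H x * (b * ‖x‖) := by gcongr; exact hup x
  nlinarith

lemma polarNorm_le_add (hN : 2 ≤ N) (ha : 0 < a) (hlow : ∀ ξ, a * ‖ξ‖ ≤ H ξ) (x y : Euc N) :
    polarNorm H x ≤ polarNorm H y + a⁻¹ * dist x y := by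
  have : Nonempty (Fin N) := ⟨⟨0, by omega⟩⟩
  obtain ⟨ξ₀, hξ₀⟩ := exists_ne (0 : Euc N)
  refine csSup_le ⟨_, ξ₀, hξ₀, rfl⟩ ?_
  rintro r ⟨ξ, hξ, rfl⟩
  have h1 := inner_div_le_polarNorm ha hlow hξ y
  have h2 := inner_div_le_norm_div ha hlow hξ (x - y)
  have h3 : ⟪ξ, x⟫ / H ξ = ⟪ξ, y⟫ / H ξ + ⟪ξ, x - y⟫ / H ξ := by
    rw [inner_sub_right]; ring
  rw [h3, dist_eq_norm, inv_mul_eq_div]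
  exact add_le_add h1 h2

lemma continuous_polarNorm (hN : 2 ≤ N) (ha : 0 < a) (hlow : ∀ ξ, a * ‖ξ‖ ≤ H ξ) :
    Continuous (polarNorm H) := by
  have h : LipschitzWith (Real.toNNReal a⁻¹) (polarNorm H) := by
    refine LipschitzWith.of_le_add_mul _ fun x y => ?_
    rw [Real.coe_toNNReal _ (inv_pos.mpr ha).le]
    exact polarNorm_le_add hN ha hlow x y
  exact h.continuous

end Polar

/-! ### Cauchy-Schwarz and integration by parts -/

/-- The Cauchy-Schwarz inequality for real functions whose squares and product are integrable. -/
lemma sq_integral_mul_le {α : Type*} [MeasurableSpace α] {μ : Measure α} {f g : α → ℝ}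
    (hf : Integrable (fun x => f x ^ 2) μ) (hg : Integrable (fun x => g x ^ 2) μ)
    (hfg : Integrable (fun x => f x * g x) μ) :
    (∫ x, f x * g x ∂μ) ^ 2 ≤ (∫ x, f x ^ 2 ∂μ) * ∫ x, g x ^ 2 ∂μ := by
  -- The quadratic `t ↦ ∫ (t f + g)²` is nonnegative, so its discriminant is nonpositive.
  have h : ∀ t : ℝ, 0 ≤ (∫ x, f x ^ 2 ∂μ) * (t * t) + (2 * ∫ x, f x * g x ∂μ) * t
      + ∫ x, g x ^ 2 ∂μ := by
    intro t
    have h0 : 0 ≤ ∫ x, (t * f x + g x) ^ 2 ∂μ := integral_nonneg fun x => sq_nonneg _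
    have h1 : ∫ x, (t * f x + g x) ^ 2 ∂μ
        = ∫ x, ((t * t) * f x ^ 2 + (2 * t) * (f x * g x)) + g x ^ 2 ∂μ := by
      congr 1 with x; ring
    have h2 : Integrable (fun x => (t * t) * f x ^ 2 + (2 * t) * (f x * g x)) μ :=
      (hf.const_mul _).add (hfg.const_mul _)
    rw [h1, integral_add h2 hg,
      integral_add (hf.const_mul _) (hfg.const_mul _), integral_const_mul,
      integral_const_mul] at h0
    linarith
  have := discrim_le_zero h
  rw [discrim] at this
  nlinarith

/-- Integration by parts of `u²` against the radial field `x`, whose divergence is `N`. -/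
lemma integral_mul_fderiv_self {N : ℕ} {u : Euc N → ℝ} (hu : ContDiff ℝ (⊤ : ℕ∞) u)
    (hc : HasCompactSupport u) :
    ∫ x, u x * fderiv ℝ u x x = -((N : ℝ) / 2 * ∫ x, u x ^ 2) := by
  have hcu : Continuous u := hu.continuous
  have hcd : Continuous (fderiv ℝ u) := hu.continuous_fderiv (by simp)
  have hd : Differentiable ℝ u := hu.differentiable (by simp)
  let e : Fin N → Euc N := fun i => EuclideanSpace.single i 1
  have hsq : ∀ x v, fderiv ℝ (fun y => u y ^ 2) x v = 2 * u x * fderiv ℝ u x v := by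
    intro x v
    have h := ((hd x).hasFDerivAt.pow 2).fderiv
    simp only [Nat.reduceSub, pow_one] at h
    have h' : fderiv ℝ (fun y => u y ^ 2) x = _ := h
    rw [h']
    simp
  have hint : ∀ i, Integrable fun x : Euc N => u x * (x i * fderiv ℝ u x (e i)) := fun i =>
    (by fun_prop : Continuous fun x : Euc N => u x * (x i * fderiv ℝ u x (e i)))
      |>.integrable_of_hasCompactSupport hc.mul_right
  have hcoord : ∀ (i : Fin N) (x v : Euc N), fderiv ℝ (fun y : Euc N => y i) x v = v i := by
    intro i x v
    have h : HasFDerivAt (fun y : Euc N => y i) (EuclideanSpace.proj (𝕜 := ℝ) i) x :=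
      (EuclideanSpace.proj (𝕜 := ℝ) i : Euc N →L[ℝ] ℝ).hasFDerivAt
    rw [h.fderiv]
    rfl
  have hparts : ∀ i, ∫ x : Euc N, u x * (x i * fderiv ℝ u x (e i)) = -(1 / 2 * ∫ x, u x ^ 2) := by
    intro i
    have hc2 : HasCompactSupport fun x => u x ^ 2 := by
      simp only [pow_two]
      exact hc.mul_right (f' := u)
    have hei : ∀ x : Euc N, fderiv ℝ (fun y : Euc N => y i) x (e i) = 1 := by
      intro x; rw [hcoord]; simp [e]
    have heq : ∀ x : Euc N, fderiv ℝ (fun y => u y ^ 2) x (e i) * x i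
        = 2 * (u x * (x i * fderiv ℝ u x (e i))) := by
      intro x; rw [hsq]; ring
    have h := integral_mul_fderiv_eq_neg_fderiv_mul_of_integrable (μ := (volume : Measure (Euc N)))
      (f := fun x => u x ^ 2) (g := fun x => x i) (v := e i)
      (by simpa only [heq] using (hint i).const_mul 2)
      (by
        simp only [hei, mul_one]
        exact (hcu.pow 2).integrable_of_hasCompactSupport hc2)
      ((by fun_prop : Continuous fun x : Euc N => u x ^ 2 * x i)
        |>.integrable_of_hasCompactSupport hc2.mul_right)
      (fun x _ => (hd x).pow 2) (fun x _ => by fun_prop)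
    simp only [hei, mul_one, heq, integral_const_mul] at h
    linarith
  have hsum : ∀ x : Euc N, u x * fderiv ℝ u x x = ∑ i, u x * (x i * fderiv ℝ u x (e i)) := by
    intro x
    have hx : x = ∑ i, x i • e i := by
      simpa [e] using ((EuclideanSpace.basisFun (Fin N) ℝ).sum_repr x).symm
    have h := congrArg (fderiv ℝ u x) hx
    rw [map_sum] at h
    rw [h, Finset.mul_sum]
    simp
  simp only [hsum]
  rw [integral_finsetSum _ fun i _ => hint i]
  simp only [hparts, Finset.sum_const, Finset.card_univ, Fintype.card_fin, nsmul_eq_mul]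
  ring

/-- Anisotropic uncertainty principle inequality with the weight H⁰(x). -/
theorem finsler_uncertainty_principle_polar
    (N : ℕ) (hN : 2 ≤ N) (H : Euc N → ℝ) (hH : IsFinslerNorm H)
    (u : Euc N → ℝ) (hu : IsTestFun (univ : Set (Euc N)) u) :
    ((N : ℝ) / 2) ^ 2 * (∫ x, |u x| ^ 2) ^ 2
      ≤ (∫ x, polarNorm H x ^ 2 * |u x| ^ 2) *
        ∫ x, |⟪(polarNorm H x)⁻¹ • x, gradient u x⟫| ^ 2 := by
  obtain ⟨hsm, hc, -⟩ := hu
  obtain ⟨a, b, ha, hab, hbd⟩ := hH.bounds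
  have hb : 0 < b := ha.trans_le hab
  have hlow := fun ξ => (hbd ξ).1
  have hup := fun ξ => (hbd ξ).2
  have hcu : Continuous u := hsm.continuous
  have hcd : Continuous (fderiv ℝ u) := hsm.continuous_fderiv (by simp)
  have hcp : Continuous (polarNorm H) := continuous_polarNorm hN ha hlow
  have hgrad : ∀ x, ⟪(polarNorm H x)⁻¹ • x, gradient u x⟫
      = (polarNorm H x)⁻¹ * fderiv ℝ u x x := by
    intro x
    rw [inner_gradient_right]
    simp
  have hppos : ∀ x : Euc N, x ≠ 0 → 0 < polarNorm H x := fun x hx =>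
    pos_of_mul_pos_right
      ((norm_pos_iff.mpr hx).trans_le (norm_le_mul_polarNorm ha hlow hup hx)) hb.le
  simp only [hgrad, sq_abs]
  -- The identity also holds at the origin, where both sides vanish.
  have hfg : ∀ x, (polarNorm H x * u x) * ((polarNorm H x)⁻¹ * fderiv ℝ u x x)
      = u x * fderiv ℝ u x x := by
    intro x
    rcases eq_or_ne x 0 with rfl | hx
    · simp
    · have := (hppos x hx).ne'
      field_simp
  have hbound : ∀ x, |(polarNorm H x)⁻¹ * fderiv ℝ u x x| ≤ b * ‖fderiv ℝ u x‖ := by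
    intro x
    rcases eq_or_ne x 0 with rfl | hx
    · simp only [map_zero, mul_zero, abs_zero]
      positivity
    · have hp := hppos x hx
      rw [abs_mul, abs_of_pos (inv_pos.mpr hp), inv_mul_le_iff₀ hp]
      calc |fderiv ℝ u x x| ≤ ‖fderiv ℝ u x‖ * ‖x‖ := (fderiv ℝ u x).le_opNorm x
        _ ≤ ‖fderiv ℝ u x‖ * (b * polarNorm H x) := by
          gcongr; exact norm_le_mul_polarNorm ha hlow hup hx
        _ = polarNorm H x * (b * ‖fderiv ℝ u x‖) := by ring
  have hif : Integrable fun x => (polarNorm H x * u x) ^ 2 := by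
    refine Continuous.integrable_of_hasCompactSupport (by fun_prop) ?_
    simp only [pow_two]
    exact (hc.mul_left (f := polarNorm H)).mul_right
  have hig : Integrable fun x => ((polarNorm H x)⁻¹ * fderiv ℝ u x x) ^ 2 := by
    have hdom : Integrable fun x => (b * ‖fderiv ℝ u x‖) ^ 2 := by
      refine Continuous.integrable_of_hasCompactSupport (by fun_prop) ?_
      simp only [pow_two]
      exact ((hc.fderiv (𝕜 := ℝ)).norm.mul_left (f := fun _ => b)).mul_right
    have hmeas : Measurable fun x => ((polarNorm H x)⁻¹ * fderiv ℝ u x x) ^ 2 :=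
      (hcp.measurable.inv.mul (by fun_prop : Continuous fun x => fderiv ℝ u x x).measurable).pow_const
        2
    refine hdom.mono' hmeas.aestronglyMeasurable (Eventually.of_forall fun x => ?_)
    rw [Real.norm_of_nonneg (sq_nonneg _), ← sq_abs]
    exact pow_le_pow_left₀ (abs_nonneg _) (hbound x) 2
  have hifg : Integrable
      fun x => (polarNorm H x * u x) * ((polarNorm H x)⁻¹ * fderiv ℝ u x x) := by
    simp only [hfg]
    exact (by fun_prop : Continuous fun x => u x * fderiv ℝ u x x)
      |>.integrable_of_hasCompactSupport hc.mul_right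
  have h := sq_integral_mul_le hif hig hifg
  simp only [hfg, integral_mul_fderiv_self hsm hc, mul_pow, neg_sq] at h
  simpa only [mul_pow] using h
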